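/- For d = 2 and D the unit disk, and B the Berry Random Wave Model (stationary isotropic Gaussian field on R^2 with covariance J_0(|x-y|), i.e. isotropic spectral measure δ_1), one has Var(∫_{tD} B_x dx) = const · t^2 J_1(t)^2. In particular, the set {t ≥ T : Var(∫_{tD} B_x dx) = 0} is infinite for every T > 0. -/

import Mathlib

open MeasureTheory ProbabilityTheory Real
open scoped Pointwise

/-- The Bessel function of the first kind of order `ν`, via the Mehler–Sonine
representation (valid for `ν > -1/2`). -/
noncomputable def besselJ (ν t : ℝ) : ℝ :=
  (t / 2) ^ ν / (Real.sqrt π * Real.Gamma (ν + 1 / 2)) *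
    ∫ s in (-1 : ℝ)..1, Real.cos (t * s) * (1 - s ^ 2) ^ (ν - 1 / 2)

/-!
By Fubini, the variance of the integral of a stationary field over `tD` is the integral of
`|F[1_{tD}]|²` against the spectral measure. For Berry's model that measure is uniform on the unit
circle, where `F[1_{tD}]` is constant: slicing the disk orthogonally to the frequency turns it into
the Mehler–Sonine integral `2πt J₁(t)`.

Up to a positive factor, `J₁(nπ)` is `∫_{-1}^1 cos(nπs) √(1 - s²) ds`, that is, `(-1)ⁿ` times the
integral of the cosine against a concave function over `n` full periods. The latter is nonpositive,
because affine functions integrate to zero against the cosine over a period, so `J₁` has a zero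
between any two consecutive multiples of `π`.
-/

section RandomField

variable {T Ω : Type*} [MeasurableSpace T] [MeasurableSpace Ω] {μ : Measure T} [IsFiniteMeasure μ]
  {P : Measure Ω} {X : T → Ω → ℝ}

lemma memLp_two_of_integral_sq_ne_zero {Y : Ω → ℝ} (hY : AEStronglyMeasurable Y P)
    (h : ∫ ω, Y ω ^ 2 ∂P ≠ 0) : MemLp Y 2 P :=
  -- The Bochner integral of a non-integrable function is `0`.
  (memLp_two_iff_integrable_sq hY).2 (.of_integral_ne_zero h)

lemma memLp_two_uncurry_of_integral_sq_le [SFinite P] (hX : Measurable (Function.uncurry X))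
    (hX2 : ∀ x, MemLp (X x) 2 P) {C : ℝ} (hC : ∀ x, ∫ ω, X x ω ^ 2 ∂P ≤ C) :
    MemLp (Function.uncurry X) 2 (μ.prod P) := by
  have hsq : Measurable fun p : T × Ω => X p.1 p.2 ^ 2 := hX.pow_const 2
  rw [memLp_two_iff_integrable_sq hX.aestronglyMeasurable]
  refine (integrable_prod_iff hsq.aestronglyMeasurable).2
    ⟨.of_forall fun x => (hX2 x).integrable_sq, .of_bound ?_ C <| .of_forall fun x => ?_⟩
  · exact hsq.norm.stronglyMeasurable.integral_prod_right.aestronglyMeasurable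
  · rw [norm_of_nonneg (integral_nonneg fun _ => norm_nonneg _)]
    simpa using hC x

lemma integrable_mul_section_of_memLp_two [SFinite P]
    (hX : MemLp (Function.uncurry X) 2 (μ.prod P)) :
    Integrable (Function.uncurry fun (p : T × T) ω => X p.1 ω * X p.2 ω) ((μ.prod μ).prod P) := by
  have hX' : MemLp (Function.uncurry X) 2 ((μ Set.univ • μ).prod P) := by
    rw [Measure.prod_smul_left]
    exact hX.smul_measure (measure_ne_top μ _)
  have hfst : MeasurePreserving Prod.fst (μ.prod μ) (μ Set.univ • μ) :=
    ⟨measurable_fst, Measure.map_fst_prod⟩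
  have hsnd : MeasurePreserving Prod.snd (μ.prod μ) (μ Set.univ • μ) :=
    ⟨measurable_snd, Measure.map_snd_prod⟩
  exact (hX'.comp_measurePreserving (hfst.prod (.id P))).integrable_mul
    (hX'.comp_measurePreserving (hsnd.prod (.id P)))

theorem variance_integral_eq_integral_covariance [IsProbabilityMeasure P]
    (hX : MemLp (Function.uncurry X) 2 (μ.prod P)) :
    Var[fun ω => ∫ x, X x ω ∂μ; P] = ∫ p, cov[X p.1, X p.2; P] ∂(μ.prod μ) := by
  have hmul := integrable_mul_section_of_memLp_two hX
  have hint : Integrable (Function.uncurry X) (μ.prod P) := hX.integrable one_le_two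
  have hsq (ω : Ω) : (∫ x, X x ω ∂μ) ^ 2 = ∫ p : T × T, X p.1 ω * X p.2 ω ∂(μ.prod μ) := by
    rw [sq, ← integral_prod_mul]
  have hmean : Integrable (fun x => ∫ ω, X x ω ∂P) μ := hint.integral_prod_left
  have hsecond : Integrable (fun p : T × T => ∫ ω, X p.1 ω * X p.2 ω ∂P) (μ.prod μ) :=
    hmul.integral_prod_left
  have hsection : ∀ᵐ x ∂μ, MemLp (X x) 2 P := by
    filter_upwards [hX.integrable_sq.prod_right_ae, hX.1.prodMk_left] with x hx hxm
    exact (memLp_two_iff_integrable_sq hxm).2 hx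
  have hcov : ∀ᵐ p ∂(μ.prod μ), cov[X p.1, X p.2; P]
      = (∫ ω, X p.1 ω * X p.2 ω ∂P) - (∫ ω, X p.1 ω ∂P) * ∫ ω, X p.2 ω ∂P := by
    filter_upwards [Measure.quasiMeasurePreserving_fst.ae hsection,
      Measure.quasiMeasurePreserving_snd.ae hsection] with p hp₁ hp₂
    exact covariance_eq_sub hp₁ hp₂
  have hL2 : MemLp (fun ω => ∫ x, X x ω ∂μ) 2 P := by
    refine (memLp_two_iff_integrable_sq (f := fun ω => ∫ x, X x ω ∂μ)
      hint.integral_prod_right.aestronglyMeasurable).2 ?_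
    simp only [hsq]
    exact hmul.integral_prod_right
  calc Var[fun ω => ∫ x, X x ω ∂μ; P]
      = (∫ ω, (∫ x, X x ω ∂μ) ^ 2 ∂P) - (∫ ω, ∫ x, X x ω ∂μ ∂P) ^ 2 := variance_eq_sub hL2
    _ = (∫ p : T × T, ∫ ω, X p.1 ω * X p.2 ω ∂P ∂(μ.prod μ))
        - ∫ p : T × T, (∫ ω, X p.1 ω ∂P) * ∫ ω, X p.2 ω ∂P ∂(μ.prod μ) := by
      rw [← integral_integral_swap hint, sq,
        integral_prod_mul (fun x => ∫ ω, X x ω ∂P) fun x => ∫ ω, X x ω ∂P,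
        integral_integral_swap hmul]
      simp only [hsq]
    _ = ∫ p, cov[X p.1, X p.2; P] ∂(μ.prod μ) := by
      rw [integral_congr_ae hcov, integral_sub hsecond (hmean.mul_prod hmean)]

end RandomField

section Spectral

variable {E : Type*} [NormedAddCommGroup E] [InnerProductSpace ℝ E] [MeasurableSpace E]
  [BorelSpace E] [SecondCountableTopology E] (G μ : Measure E) [IsFiniteMeasure G]
  [IsFiniteMeasure μ]

open scoped RealInnerProductSpace ComplexConjugate in
theorem integral_charFun_sub_eq_integral_sq_norm_charFun :
    ∫ p : E × E, charFun G (p.1 - p.2) ∂(μ.prod μ) = ∫ ξ, ‖charFun μ ξ‖ ^ 2 ∂G := by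
  let e (ξ x : E) : ℂ := Complex.exp (⟪ξ, x⟫ * Complex.I)
  have hsub (ξ x y : E) : e ξ (x - y) = e ξ x * e ξ (-y) := by
    simp only [e, ← Complex.exp_add, inner_sub_right, inner_neg_right, Complex.ofReal_sub,
      Complex.ofReal_neg]
    ring_nf
  have hint : Integrable (fun q : (E × E) × E => e q.2 (q.1.1 - q.1.2)) ((μ.prod μ).prod G) :=
    .of_bound (Continuous.aestronglyMeasurable (by fun_prop)) 1
      (.of_forall fun q => (Complex.norm_exp_ofReal_mul_I _).le)
  have he (ξ : E) : ∫ x, e ξ x ∂μ = charFun μ ξ := by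
    simp only [e, charFun_apply, real_inner_comm]
  have he_neg (ξ : E) : ∫ x, e ξ (-x) ∂μ = conj (charFun μ ξ) := by
    rw [← charFun_neg]
    simp only [e, charFun_apply, inner_neg_right, real_inner_comm]
  calc ∫ p : E × E, charFun G (p.1 - p.2) ∂(μ.prod μ)
      = ∫ ξ, ∫ p : E × E, e ξ (p.1 - p.2) ∂(μ.prod μ) ∂G := integral_integral_swap hint
    _ = ∫ ξ, ((‖charFun μ ξ‖ ^ 2 : ℝ) : ℂ) ∂G := by
      refine integral_congr_ae (.of_forall fun ξ => ?_)
      simp only [hsub]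
      rw [integral_prod_mul (e ξ) fun y => e ξ (-y), he, he_neg, Complex.mul_conj,
        Complex.normSq_eq_norm_sq]
    _ = ∫ ξ, ‖charFun μ ξ‖ ^ 2 ∂G := integral_ofReal

theorem variance_integral_eq_integral_sq_norm_charFun {Ω : Type*} [MeasurableSpace Ω]
    {P : Measure Ω} [IsProbabilityMeasure P] {X : E → Ω → ℝ}
    (hX : MemLp (Function.uncurry X) 2 (μ.prod P))
    (hcov : ∀ x y, (cov[X x, X y; P] : ℂ) = charFun G (x - y)) :
    Var[fun ω => ∫ x, X x ω ∂μ; P] = ∫ ξ, ‖charFun μ ξ‖ ^ 2 ∂G := by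
  rw [variance_integral_eq_integral_covariance hX, ← Complex.ofReal_inj,
    ← integral_charFun_sub_eq_integral_sq_norm_charFun G μ, ← integral_complex_ofReal]
  simp only [hcov]

end Spectral

section Bessel

lemma besselJ_zero_eq_integral_cos_mul_cos (t : ℝ) :
    besselJ 0 t = π⁻¹ * ∫ θ in 0..π, cos (t * cos θ) := by
  have hweight : ∫ s in (-1 : ℝ)..1, cos (t * s) * (1 - s ^ 2) ^ (0 - 1 / 2 : ℝ)
      = ∫ s in (-1 : ℝ)..1, cos (t * s) * √(1 - s ^ 2)⁻¹ := by
    refine intervalIntegral.integral_congr fun s hs => ?_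
    rw [Set.uIcc_of_le (by norm_num)] at hs
    have hs' : 0 ≤ 1 - s ^ 2 := by nlinarith [hs.1, hs.2]
    simp only [zero_sub, rpow_neg hs', sqrt_eq_rpow, inv_rpow hs']
  rw [besselJ, hweight, ← Polynomial.Chebyshev.integral_measureT fun s => cos (t * s),
    Polynomial.Chebyshev.integral_measureT_eq_integral_cos, zero_add, Gamma_one_half_eq,
    mul_self_sqrt pi_pos.le, rpow_zero, one_div]

lemma besselJ_one_eq_integral_cos_mul_sqrt (t : ℝ) :
    besselJ 1 t = t / π * ∫ s in (-1 : ℝ)..1, cos (t * s) * √(1 - s ^ 2) := by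
  have hGamma : Gamma (1 + 1 / 2) = √π / 2 := by
    rw [add_comm, Gamma_add_one (by norm_num), Gamma_one_half_eq]
    ring
  have hconst : t / 2 / (√π * (√π / 2)) = t / π := by
    rw [← mul_div_assoc, mul_self_sqrt pi_pos.le]
    field_simp
  rw [besselJ, hGamma, rpow_one, hconst]
  norm_num [sqrt_eq_rpow]

lemma continuous_besselJ_one : Continuous (besselJ 1) := by
  simp only [funext besselJ_one_eq_integral_cos_mul_sqrt]
  refine (continuous_id.div_const π).mul ?_
  exact intervalIntegral.continuous_parametric_intervalIntegral_of_continuous' (by fun_prop) _ _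

end Bessel

section BesselZeros

-- On `[0, 2π]` a concave function lies above its secant through `π / 2` and `3 * π / 2` exactly
-- between these points, which is where `cos` is nonpositive.
lemma cos_mul_le_cos_mul_secant_of_concaveOn {f : ℝ → ℝ} (hf : ConcaveOn ℝ (Set.Icc 0 (2 * π)) f)
    {u : ℝ} (hu : u ∈ Set.Icc 0 (2 * π)) :
    cos u * f u ≤ cos u * (f (π / 2) + (f (3 * π / 2) - f (π / 2)) / π * (u - π / 2)) := by
  have hpi := pi_pos
  have three_point {x y z : ℝ} (hx : 0 ≤ x) (hz : z ≤ 2 * π) (hxy : x < y) (hyz : y < z) :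
      (z - y) * f x + (y - x) * f z ≤ (z - x) * f y := by
    have := hf.neg.secant_mono_aux1 ⟨hx, by linarith⟩ ⟨by linarith, hz⟩ hxy hyz
    simp only [Pi.neg_apply] at this
    linarith
  set secant := f (π / 2) + (f (3 * π / 2) - f (π / 2)) / π * (u - π / 2) with hsecant
  have hsecant_mul : π * secant = (3 * π / 2 - u) * f (π / 2) + (u - π / 2) * f (3 * π / 2) := by
    rw [hsecant]
    field_simp
    ring
  rcases lt_trichotomy u (π / 2) with hlt | rfl | hgt
  · have := three_point hu.1 (by linarith) hlt (by linarith : π / 2 < 3 * π / 2)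
    exact mul_le_mul_of_nonneg_left (by nlinarith)
      (cos_nonneg_of_neg_pi_div_two_le_of_le (by linarith [hu.1]) hlt.le)
  · simp
  rcases lt_trichotomy u (3 * π / 2) with hlt' | rfl | hgt'
  · have := three_point (by positivity) (by linarith) hgt hlt'
    exact mul_le_mul_of_nonpos_left (by nlinarith)
      (cos_nonpos_of_pi_div_two_le_of_le hgt.le (by linarith))
  · rw [show 3 * π / 2 = π / 2 + π by ring, cos_add_pi, cos_pi_div_two]
    simp
  · have := three_point (by positivity) hu.2 (by linarith : π / 2 < 3 * π / 2) hgt'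
    refine mul_le_mul_of_nonneg_left (by nlinarith) ?_
    rw [← cos_sub_two_pi]
    exact cos_nonneg_of_neg_pi_div_two_le_of_le (by linarith) (by linarith [hu.2])

lemma integral_cos_mul_affine (a b c : ℝ) :
    ∫ u in 0..2 * π, cos u * (a + b * (u - c)) = 0 := by
  have hderiv (u : ℝ) : HasDerivAt (fun u => sin u * (a + b * (u - c)) + b * cos u)
      (cos u * (a + b * (u - c))) u := by
    have haffine := (((hasDerivAt_id u).sub_const c).const_mul b).const_add a
    refine (((hasDerivAt_sin u).mul haffine).add ((hasDerivAt_cos u).const_mul b)).congr_deriv ?_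
    simp only [id]
    ring
  rw [intervalIntegral.integral_eq_sub_of_hasDerivAt (fun u _ => hderiv u)
    (Continuous.intervalIntegrable (by fun_prop) _ _)]
  simp

lemma integral_cos_mul_nonpos_of_concaveOn {f : ℝ → ℝ}
    (hf : ConcaveOn ℝ (Set.Icc 0 (2 * π)) f) (hfc : ContinuousOn f (Set.Icc 0 (2 * π))) :
    ∫ u in 0..2 * π, cos u * f u ≤ 0 := by
  refine LE.le.trans_eq ?_
    (integral_cos_mul_affine (f (π / 2)) ((f (3 * π / 2) - f (π / 2)) / π) (π / 2))
  exact intervalIntegral.integral_mono_on two_pi_pos.le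
    (ContinuousOn.intervalIntegrable_of_Icc two_pi_pos.le (by fun_prop))
    (Continuous.intervalIntegrable (μ := volume) (by fun_prop) _ _)
    fun u hu => cos_mul_le_cos_mul_secant_of_concaveOn hf hu

lemma integral_cos_mul_nonpos_of_concaveOn_nat_mul {n : ℕ} {f : ℝ → ℝ}
    (hf : ConcaveOn ℝ (Set.Icc 0 (n * (2 * π))) f)
    (hfc : ContinuousOn f (Set.Icc 0 (n * (2 * π)))) :
    ∫ u in 0..n * (2 * π), cos u * f u ≤ 0 := by
  have hmaps {k : ℕ} (hk : k < n) :
      Set.MapsTo (fun u => k * (2 * π) + u) (Set.Icc 0 (2 * π)) (Set.Icc 0 (n * (2 * π))) := by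
    rintro u ⟨hu₀, hu₁⟩
    have hk' : (k + 1 : ℝ) * (2 * π) ≤ n * (2 * π) := by gcongr; exact_mod_cast hk
    exact ⟨by positivity, by linarith⟩
  have hperiod (k : ℕ) (hk : k < n) :
      ∫ u in k * (2 * π)..(k + 1 : ℕ) * (2 * π), cos u * f u ≤ 0 := by
    have hshift := intervalIntegral.integral_comp_add_left (a := 0) (b := 2 * π)
      (fun u => cos u * f u) (k * (2 * π))
    rw [add_zero, ← add_one_mul, ← Nat.cast_add_one] at hshift
    rw [← hshift]
    simp only [add_comm (_ * (2 * π)), cos_add_nat_mul_two_pi]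
    simp only [add_comm _ (_ * (2 * π))]
    exact integral_cos_mul_nonpos_of_concaveOn
      ((hf.translate_right _).subset (hmaps hk) (convex_Icc _ _))
      (hfc.comp (by fun_prop) (hmaps hk))
  have hint (k : ℕ) (hk : k < n) : IntervalIntegrable (fun u => cos u * f u) volume
      (k * (2 * π)) ((k + 1 : ℕ) * (2 * π)) := by
    refine ContinuousOn.intervalIntegrable_of_Icc (by gcongr; simp)
      (ContinuousOn.mono (s := Set.Icc 0 (n * (2 * π))) (by fun_prop)
        (Set.Icc_subset_Icc (by positivity) (by gcongr; exact hk)))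
  have hsum := intervalIntegral.sum_integral_adjacent_intervals hint
  rw [Nat.cast_zero, zero_mul] at hsum
  rw [← hsum]
  exact Finset.sum_nonpos fun k hk => hperiod k (Finset.mem_range.mp hk)

lemma neg_one_pow_mul_integral_cos_nat_mul_pi_nonpos_of_concaveOn {n : ℕ} (hn : 0 < n) {f : ℝ → ℝ}
    (hf : ConcaveOn ℝ (Set.Icc (-1) 1) f) (hfc : ContinuousOn f (Set.Icc (-1) 1)) :
    (-1) ^ n * ∫ s in (-1 : ℝ)..1, cos (n * π * s) * f s ≤ 0 := by
  have hnpi : 0 < n * π := by positivity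
  let rescale : ℝ →ᵃ[ℝ] ℝ := AffineMap.lineMap (-1) ((n * π)⁻¹ - 1)
  have hrescale (u : ℝ) : rescale u = u / (n * π) - 1 := by
    simp only [rescale, AffineMap.lineMap_apply_ring']
    ring
  have hmaps : Set.MapsTo rescale (Set.Icc 0 (n * (2 * π))) (Set.Icc (-1) 1) := by
    rintro u ⟨hu₀, hu₁⟩
    have h₀ : 0 ≤ u / (n * π) := by positivity
    have h₁ : u / (n * π) ≤ 2 := (div_le_iff₀ hnpi).2 (by linarith)
    rw [hrescale]
    constructor <;> linarith
  have hnonpos : ∫ u in 0..n * (2 * π), cos u * f (rescale u) ≤ 0 :=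
    integral_cos_mul_nonpos_of_concaveOn_nat_mul
      ((hf.comp_affineMap rescale).subset hmaps (convex_Icc _ _))
      (hfc.comp AffineMap.lineMap_continuous.continuousOn hmaps)
  have hcos (u : ℝ) : cos (n * π * rescale u) = (-1) ^ n * cos u := by
    rw [hrescale, mul_sub, mul_div_cancel₀ _ hnpi.ne', mul_one, cos_sub_nat_mul_pi]
  have hsubst : ∫ s in (-1 : ℝ)..1, cos (n * π * s) * f s
      = (n * π)⁻¹ * ((-1) ^ n * ∫ u in 0..n * (2 * π), cos u * f (rescale u)) := by
    have := intervalIntegral.inv_mul_integral_comp_div_sub (a := 0) (b := n * (2 * π))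
      (f := fun s => cos (n * π * s) * f s) (n * π) 1
    rw [zero_div, zero_sub, show n * (2 * π) / (n * π) - 1 = 1 by field_simp; norm_num] at this
    rw [← this]
    simp only [← hrescale, hcos]
    simp only [mul_assoc, intervalIntegral.integral_const_mul]
  rw [hsubst, mul_left_comm, ← mul_assoc ((-1) ^ n), ← mul_pow, neg_one_mul, neg_neg, one_pow,
    one_mul]
  exact mul_nonpos_of_nonneg_of_nonpos (by positivity) hnonpos

lemma concaveOn_sqrt_one_sub_sq : ConcaveOn ℝ (Set.Icc (-1) 1) fun s : ℝ => √(1 - s ^ 2) := by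
  have hnonneg : ∀ s ∈ Set.Icc (-1 : ℝ) 1, 0 ≤ 1 - s ^ 2 := fun s hs => by nlinarith [hs.1, hs.2]
  have hquad : ConcaveOn ℝ (Set.Icc (-1 : ℝ) 1) fun s : ℝ => 1 - s ^ 2 :=
    (concaveOn_const 1 (convex_Icc _ _)).sub (even_two.convexOn_pow.subset (Set.subset_univ _)
      (convex_Icc _ _))
  refine ⟨convex_Icc _ _, fun x hx y hy a b ha hb hab => ?_⟩
  calc a • √(1 - x ^ 2) + b • √(1 - y ^ 2)
      ≤ √(a • (1 - x ^ 2) + b • (1 - y ^ 2)) :=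
        strictConcaveOn_sqrt.concaveOn.2 (hnonneg x hx) (hnonneg y hy) ha hb hab
    _ ≤ √(1 - (a • x + b • y) ^ 2) := sqrt_le_sqrt (hquad.2 hx hy ha hb hab)

lemma neg_one_pow_mul_besselJ_one_nat_mul_pi_nonpos (n : ℕ) :
    (-1) ^ n * besselJ 1 (n * π) ≤ 0 := by
  rw [besselJ_one_eq_integral_cos_mul_sqrt, mul_left_comm]
  rcases n.eq_zero_or_pos with rfl | hn
  · simp
  · exact mul_nonpos_of_nonneg_of_nonpos (by positivity)
      (neg_one_pow_mul_integral_cos_nat_mul_pi_nonpos_of_concaveOn hn concaveOn_sqrt_one_sub_sq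
        (by fun_prop))

lemma frequently_atTop_besselJ_one_eq_zero : ∃ᶠ t in Filter.atTop, besselJ 1 t = 0 := by
  refine Filter.frequently_atTop'.2 fun N => ?_
  obtain ⟨m, hm⟩ := exists_nat_gt (max N 0)
  have heven := neg_one_pow_mul_besselJ_one_nat_mul_pi_nonpos (2 * m)
  have hodd := neg_one_pow_mul_besselJ_one_nat_mul_pi_nonpos (2 * m + 1)
  rw [(even_two_mul m).neg_one_pow, one_mul] at heven
  rw [(odd_two_mul_add_one m).neg_one_pow, neg_one_mul, Left.neg_nonpos_iff] at hodd
  obtain ⟨t, ht, hzero⟩ := intermediate_value_Icc (by gcongr; simp)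
    continuous_besselJ_one.continuousOn ⟨heven, hodd⟩
  refine ⟨t, ?_, hzero⟩
  have := ht.1
  push_cast at this
  nlinarith [pi_gt_three, (max_lt_iff.1 hm).1, (max_lt_iff.1 hm).2]

end BesselZeros

section UnitCircle

/-- The uniform probability measure on the unit circle of the plane, as the law of
`(cos θ, sin θ)` for `θ` uniform on `(-π, π]`. It is the spectral measure of Berry's model. -/
noncomputable def unitCircleMeasure : Measure (EuclideanSpace ℝ (Fin 2)) :=
  (volume[|Set.Ioc (-π) π]).map fun θ => !₂[cos θ, sin θ]

lemma measurable_cos_sin : Measurable fun θ : ℝ => !₂[cos θ, sin θ] := by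
  fun_prop

instance : IsProbabilityMeasure unitCircleMeasure := by
  have : IsProbabilityMeasure (volume[|Set.Ioc (-π) π]) :=
    cond_isProbabilityMeasure_of_finite (by simp [pi_pos]) (by simp)
  exact Measure.isProbabilityMeasure_map measurable_cos_sin.aemeasurable

lemma norm_cos_sin (θ : ℝ) : ‖!₂[cos θ, sin θ]‖ = 1 := by
  simp [EuclideanSpace.norm_eq]

lemma ae_unitCircleMeasure_norm_eq_one : ∀ᵐ ξ ∂unitCircleMeasure, ‖ξ‖ = 1 := by
  refine (ae_map_iff measurable_cos_sin.aemeasurable (measurableSet_eq_fun (by fun_prop)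
    (by fun_prop))).2 (.of_forall norm_cos_sin)

lemma integral_unitCircleMeasure {F : Type*} [NormedAddCommGroup F] [NormedSpace ℝ F]
    {f : EuclideanSpace ℝ (Fin 2) → F} (hf : Continuous f) :
    ∫ ξ, f ξ ∂unitCircleMeasure = (2 * π)⁻¹ • ∫ θ in -π..π, f !₂[cos θ, sin θ] := by
  rw [unitCircleMeasure, integral_map measurable_cos_sin.aemeasurable hf.aestronglyMeasurable,
    ProbabilityTheory.cond, integral_smul_measure,
    intervalIntegral.integral_of_le (by linarith [pi_pos])]
  simp [two_mul, pi_pos.le]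

lemma exists_eq_norm_smul_cos_sin (x : EuclideanSpace ℝ (Fin 2)) :
    ∃ φ : ℝ, x = ‖x‖ • !₂[cos φ, sin φ] := by
  have hnorm : ‖Complex.mk (x 0) (x 1)‖ = ‖x‖ := by
    rw [Complex.norm_eq_sqrt_sq_add_sq, EuclideanSpace.norm_eq, Fin.sum_univ_two]
    simp only [norm_eq_abs, sq_abs]
  refine ⟨Complex.arg ⟨x 0, x 1⟩, ?_⟩
  ext i
  fin_cases i
  · simp [← hnorm, Complex.norm_mul_cos_arg]
  · simp [← hnorm, Complex.norm_mul_sin_arg]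

lemma integral_exp_mul_cos_mul_I (r : ℝ) :
    ∫ θ in -π..π, Complex.exp ((r * cos θ : ℝ) * Complex.I)
      = 2 * ∫ θ in 0..π, cos (r * cos θ) := by
  have hint (a b : ℝ) : IntervalIntegrable
      (fun θ => Complex.exp ((r * cos θ : ℝ) * Complex.I)) volume a b :=
    Continuous.intervalIntegrable (by fun_prop) a b
  have hint_neg : IntervalIntegrable
      (fun θ => Complex.exp (-(r * cos θ : ℝ) * Complex.I)) volume 0 π :=
    Continuous.intervalIntegrable (by fun_prop) 0 π
  have hleft : ∫ θ in -π..0, Complex.exp ((r * cos θ : ℝ) * Complex.I)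
      = ∫ θ in 0..π, Complex.exp (-(r * cos θ : ℝ) * Complex.I) := by
    have := intervalIntegral.integral_comp_sub_right (a := 0) (b := π)
      (fun θ => Complex.exp ((r * cos θ : ℝ) * Complex.I)) π
    rw [zero_sub, sub_self] at this
    simp only [← this, cos_sub_pi, mul_neg, Complex.ofReal_neg]
  rw [← intervalIntegral.integral_add_adjacent_intervals (hint _ 0) (hint 0 _), hleft, add_comm,
    ← intervalIntegral.integral_add (hint 0 π) hint_neg, ← intervalIntegral.integral_ofReal,
    ← intervalIntegral.integral_const_mul]
  simp only [Complex.ofReal_cos, Complex.two_cos]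

theorem charFun_unitCircleMeasure (x : EuclideanSpace ℝ (Fin 2)) :
    charFun unitCircleMeasure x = besselJ 0 ‖x‖ := by
  obtain ⟨φ, hφ⟩ := exists_eq_norm_smul_cos_sin x
  have hinner (θ : ℝ) : inner ℝ !₂[cos θ, sin θ] x = ‖x‖ * cos (θ - φ) := by
    nth_rw 1 [hφ, inner_smul_right]
    simp [PiLp.inner_apply, cos_sub, mul_comm]
  have hperiod : Function.Periodic
      (fun θ => Complex.exp ((‖x‖ * cos θ : ℝ) * Complex.I)) (2 * π) :=
    fun θ => by simp only [cos_add_two_pi]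
  have hshift : ∫ θ in -π..π, Complex.exp ((‖x‖ * cos (θ - φ) : ℝ) * Complex.I)
      = ∫ θ in -π..π, Complex.exp ((‖x‖ * cos θ : ℝ) * Complex.I) := by
    rw [intervalIntegral.integral_comp_sub_right
      (fun θ => Complex.exp ((‖x‖ * cos θ : ℝ) * Complex.I)) φ]
    convert hperiod.intervalIntegral_add_eq (-π - φ) (-π) using 2 <;> ring
  rw [charFun_apply, integral_unitCircleMeasure (by fun_prop)]
  simp only [hinner]
  rw [hshift, integral_exp_mul_cos_mul_I, besselJ_zero_eq_integral_cos_mul_cos, Complex.real_smul]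
  push_cast
  ring

lemma besselJ_zero_zero : besselJ 0 0 = 1 := by
  have := charFun_unitCircleMeasure 0
  rw [charFun_zero] at this
  simpa using this.symm

end UnitCircle

section Disk

open scoped RealInnerProductSpace

instance isFiniteMeasure_restrict_closedBall {E : Type*} [PseudoMetricSpace E] [ProperSpace E]
    [MeasurableSpace E] (μ : Measure E) [IsFiniteMeasureOnCompacts μ] (x : E) (r : ℝ) :
    IsFiniteMeasure (μ.restrict (Metric.closedBall x r)) :=
  isFiniteMeasure_restrict.2 measure_closedBall_lt_top.ne

lemma charFun_eq_integral_cos {E : Type*} [NormedAddCommGroup E] [InnerProductSpace ℝ E]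
    [MeasurableSpace E] [BorelSpace E] [SecondCountableTopology E] {μ : Measure E}
    [IsFiniteMeasure μ] {t : E} (h : charFun μ (-t) = charFun μ t) :
    charFun μ t = ∫ x, cos ⟪x, t⟫ ∂μ := by
  rw [charFun_neg, Complex.conj_eq_iff_re] at h
  have hint : Integrable (fun x => Complex.exp (⟪x, t⟫ * Complex.I)) μ :=
    .of_bound (Continuous.aestronglyMeasurable (by fun_prop)) 1
      (.of_forall fun x => (Complex.norm_exp_ofReal_mul_I _).le)
  rw [← h, charFun_apply, ← RCLike.re_eq_complex_re, ← integral_re hint]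
  simp only [RCLike.re_eq_complex_re, Complex.exp_ofReal_mul_I_re]

lemma charFun_restrict_closedBall_eq_of_norm_eq {E : Type*} [NormedAddCommGroup E]
    [InnerProductSpace ℝ E] [FiniteDimensional ℝ E] [MeasurableSpace E] [BorelSpace E]
    {v w : E} (h : ‖v‖ = ‖w‖) (r : ℝ) :
    charFun (volume.restrict (Metric.closedBall 0 r)) v
      = charFun (volume.restrict (Metric.closedBall 0 r)) w := by
  let ρ : E ≃ₗᵢ[ℝ] E := (ℝ ∙ (v - w))ᗮ.reflection
  have hpres : MeasurePreserving ρ (volume.restrict (Metric.closedBall 0 r))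
      (volume.restrict (Metric.closedBall 0 r)) := by
    have := ρ.measurePreserving.restrict_preimage
      (Metric.isClosed_closedBall (x := 0) (ε := r)).measurableSet
    rwa [ρ.preimage_closedBall, map_zero] at this
  have hinner (x : E) : ⟪ρ x, w⟫ = ⟪x, v⟫ := by
    rw [← Submodule.reflection_sub h, ρ.inner_map_map]
  simp only [charFun_apply, ← hinner]
  exact hpres.integral_comp ρ.toMeasurableEquiv.measurableEmbedding
    fun x => Complex.exp (⟪x, w⟫ * Complex.I)

lemma volume_setOf_sq_le (c : ℝ) : volume {b : ℝ | b ^ 2 ≤ c} = ENNReal.ofReal (2 * √c) := by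
  rcases le_or_gt 0 c with hc | hc
  · have : {b : ℝ | b ^ 2 ≤ c} = Set.Icc (-√c) √c := Set.ext fun b => Real.sq_le hc
    rw [this, Real.volume_Icc, sub_neg_eq_add, two_mul]
  · have : {b : ℝ | b ^ 2 ≤ c} = ∅ :=
      Set.eq_empty_of_forall_notMem fun b hb => (hc.trans_le (sq_nonneg b)).not_ge hb
    rw [this, measure_empty, sqrt_eq_zero_of_nonpos hc.le, mul_zero, ENNReal.ofReal_zero]

lemma map_apply_zero_volume_restrict_closedBall {r : ℝ} (hr : 0 ≤ r) :
    (volume.restrict (Metric.closedBall (0 : EuclideanSpace ℝ (Fin 2)) r)).map (fun x => x 0)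
      = volume.withDensity fun a => ENNReal.ofReal (2 * √(r ^ 2 - a ^ 2)) := by
  let pair : EuclideanSpace ℝ (Fin 2) → ℝ × ℝ := fun x => (x 0, x 1)
  have hpair : MeasurePreserving pair := (volume_preserving_finTwoArrow ℝ).comp
    (PiLp.volume_preserving_ofLp (Fin 2))
  refine Measure.ext fun S hS => ?_
  let region : Set (ℝ × ℝ) := {p | p.1 ∈ S ∧ p.2 ^ 2 ≤ r ^ 2 - p.1 ^ 2}
  have hregion : MeasurableSet region :=
    (measurable_fst hS).inter (measurableSet_le (f := fun p : ℝ × ℝ => p.2 ^ 2) (by fun_prop)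
      (by fun_prop))
  have hpreimage : (fun x : EuclideanSpace ℝ (Fin 2) => x 0) ⁻¹' S ∩ Metric.closedBall 0 r
      = pair ⁻¹' region := by
    ext x
    simp only [region, pair, Set.mem_inter_iff, Set.mem_preimage, mem_closedBall_zero_iff,
      Set.mem_ofPred_eq, EuclideanSpace.norm_eq, Fin.sum_univ_two, norm_eq_abs, sq_abs,
      sqrt_le_left hr, le_sub_iff_add_le']
  have hslice (a : ℝ) : volume (Prod.mk a ⁻¹' region)
      = S.indicator (fun a => ENNReal.ofReal (2 * √(r ^ 2 - a ^ 2))) a := by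
    by_cases ha : a ∈ S
    · simp only [region, Set.preimage_ofPred_eq, ha, true_and, volume_setOf_sq_le,
        Set.indicator_of_mem]
    · simp [region, ha]
  rw [Measure.map_apply (by fun_prop) hS, Measure.restrict_apply (by measurability), hpreimage,
    hpair.measure_preimage hregion.nullMeasurableSet, Measure.volume_eq_prod,
    Measure.prod_apply hregion, withDensity_apply _ hS, ← lintegral_indicator hS]
  simp only [hslice]

lemma integral_closedBall_comp_apply_zero {r : ℝ} (hr : 0 < r) (f : ℝ → ℝ) (hf : Continuous f) :
    ∫ x in Metric.closedBall (0 : EuclideanSpace ℝ (Fin 2)) r, f (x 0)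
      = 2 * r ^ 2 * ∫ s in (-1 : ℝ)..1, f (r * s) * √(1 - s ^ 2) := by
  have hweight (s : ℝ) : √(r ^ 2 - (r * s) ^ 2) = r * √(1 - s ^ 2) := by
    rw [show r ^ 2 - (r * s) ^ 2 = r ^ 2 * (1 - s ^ 2) by ring, sqrt_mul (sq_nonneg r),
      sqrt_sq hr.le]
  have hsupport : Function.support (fun s => f (r * s) * √(1 - s ^ 2)) ⊆ Set.Ioc (-1) 1 := by
    intro s hs
    have := sqrt_ne_zero'.1 (right_ne_zero_of_mul hs)
    constructor <;> nlinarith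
  calc ∫ x in Metric.closedBall (0 : EuclideanSpace ℝ (Fin 2)) r, f (x 0)
      = ∫ a, 2 * √(r ^ 2 - a ^ 2) * f a := by
        rw [← integral_map (φ := fun x : EuclideanSpace ℝ (Fin 2) => x 0) (by fun_prop)
          hf.aestronglyMeasurable, map_apply_zero_volume_restrict_closedBall hr.le,
          integral_withDensity_eq_integral_toReal_smul (by fun_prop)
            (.of_forall fun _ => ENNReal.ofReal_lt_top)]
        simp [ENNReal.toReal_ofReal]
    _ = r * ∫ s, 2 * √(r ^ 2 - (r * s) ^ 2) * f (r * s) := by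
        rw [Measure.integral_comp_mul_left fun a => 2 * √(r ^ 2 - a ^ 2) * f a,
          abs_of_pos (inv_pos.2 hr), smul_eq_mul, mul_inv_cancel_left₀ hr.ne']
    _ = 2 * r ^ 2 * ∫ s, f (r * s) * √(1 - s ^ 2) := by
        rw [← integral_const_mul, ← integral_const_mul]
        congr with s
        rw [hweight]
        ring
    _ = 2 * r ^ 2 * ∫ s in (-1 : ℝ)..1, f (r * s) * √(1 - s ^ 2) := by
        rw [intervalIntegral.integral_eq_integral_of_support_subset hsupport]

theorem charFun_volume_restrict_closedBall {r : ℝ} (hr : 0 < r) (ξ : EuclideanSpace ℝ (Fin 2)) :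
    ‖ξ‖ * charFun (volume.restrict (Metric.closedBall 0 r)) ξ
      = (2 * π * r * besselJ 1 (r * ‖ξ‖) : ℝ) := by
  let η : EuclideanSpace ℝ (Fin 2) := !₂[‖ξ‖, 0]
  have hη : ‖ξ‖ = ‖η‖ := by simp [η, EuclideanSpace.norm_eq]
  have hinner (x : EuclideanSpace ℝ (Fin 2)) : ⟪x, η⟫ = ‖ξ‖ * x 0 := by
    simp [η, PiLp.inner_apply]
  have hreal : ‖ξ‖ * ∫ x in Metric.closedBall (0 : EuclideanSpace ℝ (Fin 2)) r, cos (‖ξ‖ * x 0)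
      = 2 * π * r * besselJ 1 (r * ‖ξ‖) := by
    rw [integral_closedBall_comp_apply_zero hr (fun a => cos (‖ξ‖ * a)) (by fun_prop),
      besselJ_one_eq_integral_cos_mul_sqrt]
    simp only [← mul_assoc, mul_comm r ‖ξ‖]
    field_simp
  rw [charFun_restrict_closedBall_eq_of_norm_eq hη, charFun_eq_integral_cos
    (charFun_restrict_closedBall_eq_of_norm_eq (norm_neg η) r)]
  simp only [hinner]
  exact_mod_cast hreal

end Disk

section BerryField

variable {Ω : Type*} [MeasurableSpace Ω] {P : Measure Ω} [IsProbabilityMeasure P]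
  {B : EuclideanSpace ℝ (Fin 2) → Ω → ℝ}

theorem variance_integral_closedBall_of_integral_mul_eq_besselJ_zero
    (hB : Measurable (Function.uncurry B)) (hcent : ∀ x, ∫ ω, B x ω ∂P = 0)
    (hcov : ∀ x y, ∫ ω, B x ω * B y ω ∂P = besselJ 0 ‖x - y‖) {r : ℝ} (hr : 0 < r) :
    Var[fun ω => ∫ x in Metric.closedBall 0 r, B x ω; P] = 4 * π ^ 2 * r ^ 2 * besselJ 1 r ^ 2 := by
  have hsq (x : EuclideanSpace ℝ (Fin 2)) : ∫ ω, B x ω ^ 2 ∂P = 1 := by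
    simpa only [← sq, sub_self, norm_zero, besselJ_zero_zero] using hcov x x
  have hL2 : MemLp (Function.uncurry B) 2
      ((volume.restrict (Metric.closedBall 0 r)).prod P) :=
    memLp_two_uncurry_of_integral_sq_le hB (fun x => memLp_two_of_integral_sq_ne_zero
      hB.of_uncurry_left.aestronglyMeasurable (by simp [hsq])) fun x => (hsq x).le
  have hspectral (x y : EuclideanSpace ℝ (Fin 2)) :
      (cov[B x, B y; P] : ℂ) = charFun unitCircleMeasure (x - y) := by
    simp [charFun_unitCircleMeasure, covariance, hcent, hcov]
  have hcircle : ∀ᵐ ξ ∂unitCircleMeasure,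
      ‖charFun (volume.restrict (Metric.closedBall 0 r)) ξ‖ ^ 2
        = 4 * π ^ 2 * r ^ 2 * besselJ 1 r ^ 2 := by
    filter_upwards [ae_unitCircleMeasure_norm_eq_one] with ξ hξ
    have := charFun_volume_restrict_closedBall hr ξ
    rw [hξ, Complex.ofReal_one, one_mul, mul_one] at this
    rw [this, Complex.norm_real, norm_eq_abs, sq_abs]
    ring
  rw [variance_integral_eq_integral_sq_norm_charFun unitCircleMeasure _ hL2 hspectral,
    integral_congr_ae hcircle, integral_const, probReal_univ, one_smul]

theorem stmt_16_general
    (hB : Measurable (Function.uncurry B)) (hcent : ∀ x, ∫ ω, B x ω ∂P = 0)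
    (hcov : ∀ x y, ∫ ω, B x ω * B y ω ∂P = besselJ 0 ‖x - y‖) :
    ∃ c : ℝ, 0 < c ∧
      (∀ t : ℝ, 0 < t → Var[fun ω => ∫ x in t • Metric.closedBall 0 1, B x ω; P]
        = c * t ^ 2 * besselJ 1 t ^ 2) ∧
      ∀ T : ℝ, 0 < T →
        {t : ℝ | T ≤ t ∧
          Var[fun ω => ∫ x in t • Metric.closedBall 0 1, B x ω; P] = 0}.Infinite := by
  have hvar {t : ℝ} (ht : 0 < t) : Var[fun ω => ∫ x in t • Metric.closedBall 0 1, B x ω; P]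
      = 4 * π ^ 2 * t ^ 2 * besselJ 1 t ^ 2 := by
    rw [smul_unitClosedBall_of_nonneg ht.le]
    exact variance_integral_closedBall_of_integral_mul_eq_besselJ_zero hB hcent hcov ht
  refine ⟨4 * π ^ 2, by positivity, fun t ht => hvar ht, fun T hT => ?_⟩
  refine Set.infinite_of_forall_exists_gt fun N => ?_
  obtain ⟨t, ht, hzero⟩ := Filter.frequently_atTop'.1 frequently_atTop_besselJ_one_eq_zero (max T N)
  obtain ⟨hTt, hNt⟩ := max_lt_iff.1 ht
  exact ⟨t, ⟨hTt.le, by simp [hvar (hT.trans hTt), hzero]⟩, hNt⟩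

end BerryField

/-- For Berry's Random Wave Model on `ℝ²` (covariance `J₀(|x-y|)`) and `D` the unit disk,
`Var(∫_{tD} B_x dx) = const · t² J₁(t)²`; in particular the set of `t ≥ T` where this
variance vanishes is infinite, for every `T > 0`. -/
theorem stmt_16
    {Ω : Type*} [MeasureSpace Ω] [IsProbabilityMeasure (ℙ : Measure Ω)]
    (B : EuclideanSpace ℝ (Fin 2) → Ω → ℝ)
    (hjm : Measurable fun p : EuclideanSpace ℝ (Fin 2) × Ω => B p.1 p.2)
    (hcont : ∀ᵐ ω ∂ℙ, Continuous fun x => B x ω)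
    (hcent : ∀ x, ∫ ω, B x ω ∂ℙ = 0)
    (hcov : ∀ x y, ∫ ω, B x ω * B y ω ∂ℙ = besselJ 0 ‖x - y‖)
    (D : Set (EuclideanSpace ℝ (Fin 2)))
    (hD : D = Metric.closedBall 0 1) :
    ∃ c : ℝ, 0 < c ∧
      (∀ t : ℝ, 0 < t →
        variance (fun ω => ∫ x in t • D, B x ω) ℙ = c * t ^ 2 * besselJ 1 t ^ 2) ∧
      ∀ T : ℝ, 0 < T →
        {t : ℝ | T ≤ t ∧ variance (fun ω => ∫ x in t • D, B x ω) ℙ = 0}.Infinite :=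
  hD ▸ stmt_16_general hjm hcent hcov
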